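/- arXiv:2102.02554 — 3 statements merged into one kernel-verified Lean document; each statement's English description precedes it below -/
import Mathlib

section
/- The number of n×n matrices over F_q of rank t whose row space equals their column space is exactly ∏_{i=0}^{t-1} (q^n − q^i). -/
open Matrix

/-!
Fix a subspace `W` of dimension `t` and a `t × n` matrix `B` whose rows form a basis of `W`.
A matrix `E` has column space `W` iff `E = Bᵀ * S` for some `S` with linearly independent rows;
`S` is unique, and `E` has the same row space as `S`, since `Bᵀ` has a left inverse. So the matrices
with row space and column space both equal to `W` correspond to the bases `S` of `W`. Letting `W`
vary, one counts linearly independent `t`-tuples in `F ^ n`.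
-/

section RowSpace

variable {R l m n : Type*} [Semiring R]

/-- The row space of a matrix. The column space of `A` is encoded as `rowSpace Aᵀ`. -/
def rowSpace (A : Matrix m n R) : Submodule R (n → R) :=
  Submodule.span R (Set.range A.row)

theorem mem_rowSpace_iff_exists_vecMul_eq [Fintype m] {B : Matrix m n R} {x : n → R} :
    x ∈ rowSpace B ↔ ∃ c : m → R, c ᵥ* B = x := by
  rw [rowSpace, ← range_vecMulLinear, LinearMap.mem_range]
  simp only [vecMulLinear_apply]

theorem rowSpace_le_rowSpace_iff_exists_eq_mul [Fintype m] {A : Matrix l n R} {B : Matrix m n R} :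
    rowSpace A ≤ rowSpace B ↔ ∃ S : Matrix l m R, A = S * B := by
  constructor
  · intro h
    choose S hS using fun i ↦
      mem_rowSpace_iff_exists_vecMul_eq.1 (h (Submodule.subset_span (Set.mem_range_self i)))
    exact ⟨of S, funext fun i ↦ (hS i).symm⟩
  · rintro ⟨S, rfl⟩
    refine Submodule.span_le.2 (Set.range_subset_iff.2 fun i ↦ ?_)
    exact mem_rowSpace_iff_exists_vecMul_eq.2 ⟨S.row i, (mul_apply_eq_vecMul S B i).symm⟩

theorem rowSpace_mul_le [Fintype m] (A : Matrix l m R) (B : Matrix m n R) :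
    rowSpace (A * B) ≤ rowSpace B :=
  rowSpace_le_rowSpace_iff_exists_eq_mul.2 ⟨A, rfl⟩

/-- A square matrix is space-symmetric if its row space equals its column space. -/
def IsSpaceSymmetric (E : Matrix n n R) : Prop :=
  rowSpace E = rowSpace Eᵀ

end RowSpace

section Field

variable {F κ m n : Type*} [Field F]

theorem rank_eq_finrank_rowSpace [Finite m] [Fintype n] (A : Matrix m n F) :
    A.rank = Module.finrank F (rowSpace A) :=
  A.rank_eq_finrank_span_row

theorem finrank_rowSpace_transpose [Finite m] [Finite n] (A : Matrix m n F) :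
    Module.finrank F (rowSpace Aᵀ) = Module.finrank F (rowSpace A) := by
  cases nonempty_fintype m
  cases nonempty_fintype n
  rw [← rank_eq_finrank_rowSpace, ← rank_eq_finrank_rowSpace, rank_transpose]

variable {B : Matrix κ m F}

theorem exists_mul_transpose_eq_one [Finite κ] [Fintype m] [DecidableEq κ]
    (hB : LinearIndependent F B.row) : ∃ D : Matrix κ m F, D * Bᵀ = 1 := by
  cases nonempty_fintype κ
  have range_eq_top : LinearMap.range B.mulVecLin = ⊤ :=
    Submodule.eq_top_of_finrank_eq
      (hB.rank_matrix.trans (Module.finrank_fintype_fun_eq_card F).symm)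
  rw [← vecMul_surjective_iff_exists_left_inverse, funext (vecMul_transpose B)]
  exact LinearMap.range_eq_top.1 range_eq_top

variable [Fintype κ]

theorem linearIndependent_row_iff_finrank_rowSpace {S : Matrix κ n F} :
    LinearIndependent F S.row ↔ Module.finrank F (rowSpace S) = Fintype.card κ :=
  linearIndependent_iff_card_eq_finrank_span.trans eq_comm

theorem exists_linearIndependent_row_rowSpace_eq [Finite n] {W : Submodule F (n → F)}
    (hW : Module.finrank F W = Fintype.card κ) :
    ∃ B : Matrix κ n F, LinearIndependent F B.row ∧ rowSpace B = W := by
  let b := (Module.finBasisOfFinrankEq F W hW).reindex (Fintype.equivFin κ).symm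
  refine ⟨of fun i ↦ (b i : n → F), b.linearIndependent.map' W.subtype W.ker_subtype, ?_⟩
  calc Submodule.span F (Set.range (W.subtype ∘ b))
      = (Submodule.span F (Set.range b)).map W.subtype := by
        rw [Set.range_comp, Submodule.map_span]
    _ = W := by rw [b.span_eq, Submodule.map_subtype_top]

theorem rowSpace_transpose_mul [Finite m] (hB : LinearIndependent F B.row) (S : Matrix κ n F) :
    rowSpace (Bᵀ * S) = rowSpace S := by
  classical
  cases nonempty_fintype m
  obtain ⟨D, hD⟩ := exists_mul_transpose_eq_one hB
  refine (rowSpace_mul_le _ _).antisymm ?_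
  calc rowSpace S = rowSpace (D * (Bᵀ * S)) := by rw [← Matrix.mul_assoc, hD, Matrix.one_mul]
    _ ≤ rowSpace (Bᵀ * S) := rowSpace_mul_le _ _

theorem transpose_mul_injective [Finite m] (hB : LinearIndependent F B.row) :
    Function.Injective fun S : Matrix κ n F ↦ Bᵀ * S := by
  classical
  cases nonempty_fintype m
  obtain ⟨D, hD⟩ := exists_mul_transpose_eq_one hB
  exact mul_right_injective_of_inv _ _ hD

theorem bijOn_transpose_mul [Finite m] [Finite n] (hB : LinearIndependent F B.row) :
    Set.BijOn (fun S : Matrix κ n F ↦ Bᵀ * S)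
      {S | LinearIndependent F S.row} {E | rowSpace Eᵀ = rowSpace B} := by
  refine ⟨fun S hS ↦ ?_, (transpose_mul_injective hB).injOn, fun E hE ↦ ?_⟩
  · change rowSpace (Bᵀ * S)ᵀ = rowSpace B
    rw [transpose_mul, transpose_transpose, rowSpace_transpose_mul hS]
  · obtain ⟨S, hS⟩ := rowSpace_le_rowSpace_iff_exists_eq_mul.1 (le_of_eq hE)
    have factorization : E = Bᵀ * Sᵀ := by rw [← transpose_mul, ← hS, transpose_transpose]
    refine ⟨Sᵀ, linearIndependent_row_iff_finrank_rowSpace.2 ?_, factorization.symm⟩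
    calc Module.finrank F (rowSpace Sᵀ)
        = Module.finrank F (rowSpace E) := by rw [factorization, rowSpace_transpose_mul hB]
      _ = Module.finrank F (rowSpace Eᵀ) := (finrank_rowSpace_transpose E).symm
      _ = Fintype.card κ := by rw [hE, linearIndependent_row_iff_finrank_rowSpace.1 hB]

theorem bijOn_transpose_basis_mul [Fintype m] {basis : Submodule F (m → F) → Matrix κ m F}
    (hbasis : ∀ W : Submodule F (m → F), Module.finrank F W = Fintype.card κ →
      LinearIndependent F (basis W).row ∧ rowSpace (basis W) = W) :
    Set.BijOn (fun S : Matrix κ m F ↦ ((basis (rowSpace S))ᵀ * S : Matrix m m F))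
      {S | LinearIndependent F S.row} {E | E.rank = Fintype.card κ ∧ IsSpaceSymmetric E} := by
  have finrank_eq {S : Matrix κ m F} (hS : LinearIndependent F S.row) :=
    linearIndependent_row_iff_finrank_rowSpace.1 hS
  have rowSpace_eq {S : Matrix κ m F} (hS : LinearIndependent F S.row) :
      rowSpace ((basis (rowSpace S))ᵀ * S) = rowSpace S :=
    rowSpace_transpose_mul (hbasis _ (finrank_eq hS)).1 S
  refine ⟨fun S hS ↦ ⟨?_, ?_⟩, fun S hS S' hS' h ↦ ?_, fun E ⟨hrank, hsymm⟩ ↦ ?_⟩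
  · exact (rank_eq_finrank_rowSpace _).trans (by rw [rowSpace_eq hS, finrank_eq hS])
  · obtain ⟨hli, hspan⟩ := hbasis _ (finrank_eq hS)
    exact (rowSpace_eq hS).trans (hspan.symm.trans ((bijOn_transpose_mul hli).mapsTo hS).symm)
  · have hrow : rowSpace S = rowSpace S' :=
      (rowSpace_eq hS).symm.trans ((congrArg rowSpace h).trans (rowSpace_eq hS'))
    refine transpose_mul_injective (hbasis _ (finrank_eq hS)).1 (h.trans ?_)
    rw [hrow]
  · obtain ⟨hli, hspan⟩ := hbasis (rowSpace E) ((rank_eq_finrank_rowSpace E).symm.trans hrank)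
    obtain ⟨S, hS, factorization⟩ := (bijOn_transpose_mul hli).surjOn (hsymm.symm.trans hspan.symm)
    have hrow : rowSpace S = rowSpace E := by
      rw [← factorization, rowSpace_transpose_mul hli]
    exact ⟨S, hS, by simpa only [hrow] using factorization⟩

end Field

theorem natCard_linearIndependent_fin (K V : Type*) [DivisionRing K] [Fintype K] [AddCommGroup V]
    [Module K V] [Finite V] (k : ℕ) :
    Nat.card {s : Fin k → V // LinearIndependent K s} =
      ∏ i ∈ Finset.range k,
        (Fintype.card K ^ Module.finrank K V - Fintype.card K ^ i) := by
  obtain hk | hk := le_or_gt k (Module.finrank K V)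
  · rw [card_linearIndependent hk, Finset.prod_range]
  · have : IsEmpty {s : Fin k → V // LinearIndependent K s} :=
      ⟨fun s ↦ hk.not_ge (by simpa using s.2.fintype_card_le_finrank)⟩
    rw [Nat.card_of_isEmpty]
    exact (Finset.prod_eq_zero (Finset.mem_range.2 hk) (Nat.sub_self (_ ^ _))).symm

theorem number_of_space_symmetric_matrices_general {F n : Type*} [Field F] [Fintype F] [Fintype n]
    (t : ℕ) :
    Nat.card {E : Matrix n n F // E.rank = t ∧ IsSpaceSymmetric E} =
      ∏ i ∈ Finset.range t, (Fintype.card F ^ Fintype.card n - Fintype.card F ^ i) := by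
  choose! basis hbasis using fun W : Submodule F (n → F) ↦
    exists_linearIndependent_row_rowSpace_eq (κ := Fin t) (W := W)
  calc Nat.card {E : Matrix n n F // E.rank = t ∧ IsSpaceSymmetric E}
      = Nat.card {S : Fin t → n → F // LinearIndependent F S} := by
        simpa only [Fintype.card_fin] using!
          (Nat.card_congr (bijOn_transpose_basis_mul hbasis).equiv).symm
    _ = _ := by
        rw [natCard_linearIndependent_fin, Module.finrank_fintype_fun_eq_card]

/-- **Number of space-symmetric matrices.**
The number of `n × n` matrices over the finite field `F` with `q` elements that have
rank `t` and whose row space (span of the rows) equals their column space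
(span of the columns) is exactly `∏_{i=0}^{t-1} (q^n − q^i)`. -/
theorem number_of_space_symmetric_matrices
    (q n t : ℕ) (F : Type) [Field F] [Fintype F]
    (hq : Fintype.card F = q) (ht : t ≤ n) :
    Nat.card {E : Matrix (Fin n) (Fin n) F //
        E.rank = t ∧
        Submodule.span F (Set.range E) = Submodule.span F (Set.range Eᵀ)} =
      ∏ i ∈ Finset.range t, (q ^ n - q ^ i) := by
  simpa only [Fintype.card_fin, hq] using!
    number_of_space_symmetric_matrices_general (F := F) (n := Fin n) t
end

section
/- If E is an n×n matrix over F_q of rank t whose row space equals its column space, then there exist a matrix A ∈ F_q^{n×t} of rank t and an invertible matrix P ∈ F_q^{t×t} such that E = A·P·Aᵀ. -/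
open Matrix

/-!
Choose rows of `E` forming a basis of its row space and let `A` have them as its columns. The rows
of `E` lie in the row space of `Aᵀ` and its columns in the column space of `A`, so
`E = A * C = D * Aᵀ` for some `C` and `D`. As `A` has independent columns, `L * A = 1` for some `L`;
then `A * L` fixes `E = A * C`, whence `E = A * (L * D) * Aᵀ`. Finally `L * D` is invertible because
its rank is at least that of `E`.
-/

theorem exists_eq_mul_of_span_row_le {R k m n : Type*} [Semiring R] [Fintype k]
    {E : Matrix m n R} {B : Matrix k n R}
    (h : Submodule.span R (Set.range E.row) ≤ Submodule.span R (Set.range B.row)) :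
    ∃ D : Matrix m k R, E = D * B := by
  rw [← range_vecMulLinear B, Submodule.span_le, Set.range_subset_iff] at h
  choose D hD using h
  exact ⟨of D, funext fun i ↦ (hD i).symm⟩

theorem exists_eq_mul_of_span_col_le {R k m n : Type*} [CommSemiring R] [Fintype k]
    {E : Matrix m n R} {A : Matrix m k R}
    (h : Submodule.span R (Set.range E.col) ≤ Submodule.span R (Set.range A.col)) :
    ∃ C : Matrix k n R, E = A * C := by
  obtain ⟨C, hC⟩ := exists_eq_mul_of_span_row_le (E := Eᵀ) (B := Aᵀ) h
  exact ⟨Cᵀ, transpose_injective <| by rw [hC, transpose_mul, transpose_transpose]⟩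

theorem eq_mul_mul_of_left_inverse {R k l m n : Type*} [Semiring R]
    [DecidableEq k] [Fintype k] [Fintype l] [Fintype m]
    {E : Matrix m n R} {A : Matrix m k R} {C : Matrix k n R} {D : Matrix m l R} {B : Matrix l n R}
    {L : Matrix k m R} (hL : L * A = 1) (hC : E = A * C) (hD : E = D * B) :
    E = A * (L * D) * B :=
  calc
    E = A * (L * A) * C := by rw [hL, Matrix.mul_one, hC]
    _ = A * L * E := by rw [hC]; simp only [Matrix.mul_assoc]
    _ = A * (L * D) * B := by rw [hD]; simp only [Matrix.mul_assoc]

section Field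

variable {K k m n : Type*} [Field K] [Fintype k] [Fintype n]

theorem vecMul_surjective_of_rank_eq_card [Fintype m] {A : Matrix m k K}
    (hA : A.rank = Fintype.card k) : Function.Surjective A.vecMul := by
  suffices LinearMap.range A.vecMulLinear = ⊤ from LinearMap.range_eq_top.mp this
  apply Submodule.eq_top_of_finrank_eq
  rw [range_vecMulLinear, ← rank_eq_finrank_span_row, hA, Module.finrank_fintype_fun_eq_card]

theorem exists_isUnit_eq_mul_mul_of_rank_eq_card [DecidableEq k] [Finite m]
    {E : Matrix m n K} {A : Matrix m k K} {B : Matrix k n K} (hE : E.rank = Fintype.card k)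
    (hcol : Submodule.span K (Set.range E.col) ≤ Submodule.span K (Set.range A.col))
    (hrow : Submodule.span K (Set.range E.row) ≤ Submodule.span K (Set.range B.row)) :
    ∃ P : Matrix k k K, IsUnit P ∧ E = A * P * B := by
  have := Fintype.ofFinite m
  obtain ⟨D, hD⟩ := exists_eq_mul_of_span_row_le hrow
  obtain ⟨C, hC⟩ := exists_eq_mul_of_span_col_le hcol
  have hA : A.rank = Fintype.card k :=
    le_antisymm A.rank_le_card_width (hE ▸ hC ▸ rank_mul_le_left A C)
  obtain ⟨L, hL⟩ := vecMul_surjective_iff_exists_left_inverse.mp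
    (vecMul_surjective_of_rank_eq_card hA)
  have hP : E = A * (L * D) * B := eq_mul_mul_of_left_inverse hL hC hD
  have hP_rank : Fintype.card k ≤ (L * D).rank :=
    calc
      Fintype.card k = (A * (L * D) * B).rank := by rw [← hP, hE]
      _ ≤ (A * (L * D)).rank := rank_mul_le_left _ _
      _ ≤ (L * D).rank := rank_mul_le_right _ _
  exact ⟨L * D, vecMul_surjective_iff_isUnit.mp <| vecMul_surjective_of_rank_eq_card <|
    (rank_le_card_width _).antisymm hP_rank, hP⟩

theorem space_symmetric_decomposition_general {E : Matrix n n K} {t : ℕ} (hrank : E.rank = t)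
    (h : Submodule.span K (Set.range E.col) ≤ Submodule.span K (Set.range E.row)) :
    ∃ (A : Matrix n (Fin t) K) (P : Matrix (Fin t) (Fin t) K),
      A.rank = t ∧ IsUnit P ∧ E = A * P * Aᵀ := by
  rw [rank_eq_finrank_span_row] at hrank
  subst hrank
  obtain ⟨B, -, hspan, hB⟩ := Submodule.exists_fun_fin_finrank_span_eq K (Set.range E.row)
  obtain ⟨P, hP, hE⟩ := exists_isUnit_eq_mul_mul_of_rank_eq_card (E := E) (A := (of B)ᵀ)
    (B := of B) (by rw [rank_eq_finrank_span_row, Fintype.card_fin]) (h.trans hspan.ge) hspan.ge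
  have hB_rank : (of B)ᵀ.rank = Module.finrank K (Submodule.span K (Set.range E.row)) := by
    rw [rank_transpose, LinearIndependent.rank_matrix (M := of B) hB, Fintype.card_fin]
  exact ⟨(of B)ᵀ, P, hB_rank, hP, hE⟩

end Field

/-- If `E` is an `n × n` matrix over `F_q` of rank `t` whose row space equals its
column space (a space-symmetric matrix), then `E = A * P * Aᵀ` for some full-rank
`A ∈ F_q^{n×t}` and some invertible `P ∈ F_q^{t×t}`. -/
theorem space_symmetric_decomposition
    (q n t : ℕ) (F : Type) [Field F] [Fintype F]
    (hq : Fintype.card F = q)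
    (E : Matrix (Fin n) (Fin n) F) (hrank : E.rank = t)
    (hspsym : Submodule.span F (Set.range E) = Submodule.span F (Set.range Eᵀ)) :
    ∃ (A : Matrix (Fin n) (Fin t) F) (P : Matrix (Fin t) (Fin t) F),
      A.rank = t ∧ IsUnit P ∧ E = A * P * Aᵀ :=
  space_symmetric_decomposition_general hrank hspsym.ge
end

section
/- (Key equation.) Let t ≥ 1, let a_0,…,a_{t−1} ∈ F_{q^n} and d_0,…,d_{t−1} ∈ F_{q^n}, and define the syndrome values s_p := Σ_{l=0}^{t−1} a_l · d_l^{q^p} for all integers p ≥ 0. Suppose Γ_0,…,Γ_t ∈ F_{q^n} satisfy Σ_{j=0}^{t} Γ_j · a_l^{q^j} = 0 for every l ∈ {0,…,t−1} (i.e., the linearized polynomial Γ(x) = Σ_j Γ_j x^{q^j} vanishes on each a_l). Then for every integer p ≥ t, Σ_{j=0}^{t} Γ_j · (s_{p−j})^{q^j} = 0; equivalently, Γ(s(x)) ≡ Ω(x) mod x^{q^{n−k}} for a linearized polynomial Ω of q-degree less than t whenever the syndrome polynomial s(x) = Σ_{p=0}^{n−k−1} s_p x^{q^p} is built from such s_p.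 -/
/-! For a ring endomorphism `σ`, the syndrome `s p = ∑ l, a l * σ ^ p (d l)` satisfies
`σ ^ j (s (p - j)) = ∑ l, σ ^ j (a l) * σ ^ p (d l)`, where the second factor no longer depends on
`j`. Weighting by `Γ j` and exchanging the sums therefore gives `∑ l, Γ(a l) * σ ^ p (d l)`, and
every `Γ(a l)` vanishes. Over a finite field, `σ` is the `q`-power Frobenius. -/

open Matrix

section RingEndomorphism

variable {R ι : Type*} [Semiring R] [Fintype ι] (σ : R →+* R) (a d : ι → R)

/-- The syndrome `s_p` with error values `a` and error locators `d`, for an arbitrary ring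
endomorphism `σ` in place of the `q`-power Frobenius. -/
def syndrome (p : ℕ) : R :=
  ∑ l, a l * (σ ^ p) (d l)

theorem map_pow_syndrome (j k : ℕ) :
    (σ ^ j) (syndrome σ a d k) = ∑ l, (σ ^ j) (a l) * (σ ^ (j + k)) (d l) := by
  simp only [syndrome, map_sum, map_mul, pow_add, RingHom.mul_def, RingHom.comp_apply]

theorem sum_mul_map_pow_syndrome {t p : ℕ} (htp : t ≤ p) (Γ : Fin (t + 1) → R) :
    ∑ j : Fin (t + 1), Γ j * (σ ^ (j : ℕ)) (syndrome σ a d (p - j)) =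
      ∑ l, (∑ j, Γ j * (σ ^ (j : ℕ)) (a l)) * (σ ^ p) (d l) := by
  have map_syndrome_sub (j : Fin (t + 1)) : (σ ^ (j : ℕ)) (syndrome σ a d (p - j)) =
      ∑ l, (σ ^ (j : ℕ)) (a l) * (σ ^ p) (d l) := by
    rw [map_pow_syndrome, Nat.add_sub_cancel' (j.is_le.trans htp)]
  simp only [map_syndrome_sub, Finset.mul_sum, Finset.sum_mul, mul_assoc]
  exact Finset.sum_comm

variable {σ a} in
theorem key_equation_general {t : ℕ} {Γ : Fin (t + 1) → R}
    (hΓ : ∀ l, ∑ j, Γ j * (σ ^ (j : ℕ)) (a l) = 0) {p : ℕ} (htp : t ≤ p) :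
    ∑ j : Fin (t + 1), Γ j * (σ ^ (j : ℕ)) (syndrome σ a d (p - j)) = 0 := by
  simp only [sum_mul_map_pow_syndrome σ a d htp, hΓ, zero_mul, Finset.sum_const_zero]

end RingEndomorphism

theorem coe_frobeniusAlgHom_pow_apply (F : Type*) {K : Type*} [Field F] [Fintype F]
    [CommRing K] [Algebra F K] (j : ℕ) (x : K) :
    ((FiniteField.frobeniusAlgHom F K : K →+* K) ^ j) x = x ^ Fintype.card F ^ j := by
  rw [RingHom.coe_pow, RingHom.coe_coe, FiniteField.coe_frobeniusAlgHom, pow_iterate]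

/-- **Key equation.** Let `a_l, d_l ∈ F_{q^n}` for `l < t` and define the syndromes
`s p = ∑ l, a l * d l ^ q ^ p`. If the linearized polynomial with coefficients
`Γ_0, …, Γ_t` vanishes on each `a l`, i.e. `∑ j, Γ j * a l ^ q ^ j = 0`, then
for every `p ≥ t` we have `∑_{j=0}^{t} Γ j * (s (p − j)) ^ q ^ j = 0`; that is,
`Γ(s(x)) ≡ Ω(x) mod x^{q^{n−k}}` with `deg_q Ω < t`. -/
theorem key_equation
    (q n t : ℕ) (F K : Type) [Field F] [Fintype F] [Field K] [Fintype K] [Algebra F K]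
    (hq : Fintype.card F = q) (hK : Fintype.card K = q ^ n)
    (ht : 1 ≤ t) (a d : Fin t → K) (Γ : Fin (t + 1) → K)
    (hΓ : ∀ l, ∑ j, Γ j * a l ^ q ^ (j : ℕ) = 0)
    (s : ℕ → K) (hs : ∀ p, s p = ∑ l, a l * d l ^ q ^ p) :
    ∀ p, t ≤ p → ∑ j : Fin (t + 1), Γ j * s (p - (j : ℕ)) ^ q ^ (j : ℕ) = 0 := by
  simp only [← hq, ← coe_frobeniusAlgHom_pow_apply F] at hΓ hs ⊢
  simpa only [hs, syndrome] using fun _ => key_equation_general d hΓ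
end
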